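/- Up to isomorphism, SL(2, ℤ/7ℤ) has exactly two nontrivial irreducible finite-dimensional complex representations ρ for which ρ(t) has at most three distinct eigenvalues; both are three-dimensional, with eigenvalue sets of ρ(t) equal to {ζ₇, ζ₇², ζ₇⁴} and {ζ₇³, ζ₇⁵, ζ₇⁶} respectively. -/

import Mathlib

/-- The group `SL(2, ℤ/nℤ)`. -/
abbrev SL2 (n : ℕ) := Matrix.SpecialLinearGroup (Fin 2) (ZMod n)

/-- The element `t = [[1,1],[0,1]]` of `SL(2, ℤ/nℤ)`. -/
def tGen (n : ℕ) : SL2 n := ⟨!![1, 1; 0, 1], by simp [Matrix.det_fin_two_of]⟩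

/-- A representation is irreducible if the space is nonzero and the only invariant
subspaces are `⊥` and `⊤`. -/
def IsIrreducibleRep {G V : Type} [Group G] [AddCommGroup V] [Module ℂ V]
    (ρ : Representation ℂ G V) : Prop :=
  Nontrivial V ∧ ∀ p : Submodule ℂ V, (∀ g : G, p.map (ρ g) ≤ p) → p = ⊥ ∨ p = ⊤

/-- The primitive `m`-th root of unity `ζ_m = exp(2πi/m)`. -/
noncomputable def ζ (m : ℕ) : ℂ := Complex.exp (2 * Real.pi * Complex.I / m)

/-- A representation is nontrivial if some group element acts nontrivially. -/
def IsNontrivialRep {G V : Type} [Group G] [AddCommGroup V] [Module ℂ V]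
    (ρ : Representation ℂ G V) : Prop :=
  ∃ g : G, ρ g ≠ LinearMap.id

/-- Two representations are isomorphic if there is an equivariant linear equivalence. -/
def RepIso {G V W : Type} [Group G] [AddCommGroup V] [Module ℂ V]
    [AddCommGroup W] [Module ℂ W]
    (ρ : Representation ℂ G V) (ρ' : Representation ℂ G W) : Prop :=
  ∃ e : V ≃ₗ[ℂ] W, ∀ (g : G) (v : V), e (ρ g v) = ρ' g (e v)

/-!
For a primitive additive character `ψ` of a finite field `F`, the weights of a representation of
`SL(2, F)` are the `j` for which some nonzero vector is scaled by `ψ (j * b)` under every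
`[[1, b], [0, 1]]`. The eigenvalues of `t` are the `ψ j` for the weights `j`, and conjugation by
the diagonal torus shows that the set of weights is stable under multiplication by squares. Over
`ZMod 7` a nontrivial representation with at most three `t`-eigenvalues therefore has weights
`{1, 2, 4}` or `{3, 5, 6}`, and changing `ψ` to `ψ (3 * ·)` exchanges the two cases.

Existence: the odd functions in the Weil representation of `SL(2, F)` form an irreducible
representation whose weights are the nonzero squares.

Uniqueness: let `v` have weight `1` in a representation with weights in `{1, 2, 4}`. Because `0`,
`3`, `5` and `6` are not weights, the Bruhat relation gives linear equations between `v` and the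
weight components of the image of `v` under the Weyl element. They exclude that `-1` acts by `-1`
and show that the torus orbit of `v` spans a subrepresentation, of dimension at most three. For two
irreducible representations `V` and `W`, applying this to a vector `(v, w)` of `V × W` yields the
graph of an isomorphism.
-/

namespace SL2Rep

open Matrix
open scoped MatrixGroups

section Group

variable {F : Type*} [Field F]

/-- The unipotent element `[[1, b], [0, 1]]` of `SL(2, F)`; `unip 1` is the element `t`. -/
def unip (b : F) : SL(2, F) := ⟨!![1, b; 0, 1], by simp [det_fin_two_of]⟩

/-- The diagonal torus `a ↦ diag(a, a⁻¹)` of `SL(2, F)`. -/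
def torus : Fˣ →* SL(2, F) where
  toFun a := ⟨!![(a : F), 0; 0, ↑a⁻¹], by simp [det_fin_two_of]⟩
  map_one' := Subtype.ext <| by simp [one_fin_two]
  map_mul' a b := Subtype.ext <| by
    change _ = !![(a : F), 0; 0, ↑a⁻¹] * !![(b : F), 0; 0, ↑b⁻¹]
    simp [mul_comm]

/-- The Weyl element `[[0, -1], [1, 0]]` of `SL(2, F)`. -/
def weyl : SL(2, F) := ⟨!![0, -1; 1, 0], by simp [det_fin_two_of]⟩

@[simp] lemma coe_unip (b : F) : (unip b : Matrix (Fin 2) (Fin 2) F) = !![1, b; 0, 1] := rfl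

@[simp] lemma coe_torus (a : Fˣ) :
    (torus a : Matrix (Fin 2) (Fin 2) F) = !![(a : F), 0; 0, (a : F)⁻¹] := by
  rw [← Units.val_inv_eq_inv_val]; rfl

@[simp] lemma coe_weyl : ((weyl : SL(2, F)) : Matrix (Fin 2) (Fin 2) F) = !![0, -1; 1, 0] := rfl

lemma unip_zero : unip (0 : F) = 1 := Subtype.ext <| by simp [one_fin_two]

lemma unip_add (a b : F) : unip (a + b) = unip a * unip b :=
  Subtype.ext <| by simp [add_comm]

lemma weyl_mul_weyl : (weyl * weyl : SL(2, F)) = -1 :=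
  Subtype.ext <| by simp [one_fin_two]

lemma torus_neg (a : Fˣ) : torus (-a) = -1 * torus a :=
  Subtype.ext <| by simp

lemma torus_mul_unip (a : Fˣ) (b : F) : torus a * unip b = unip (a ^ 2 * b) * torus a :=
  Subtype.ext <| by
    simp only [Matrix.SpecialLinearGroup.coe_mul, coe_torus, coe_unip, mul_fin_two, mul_zero,
      zero_mul, add_zero, zero_add, mul_one, one_mul]
    field_simp

lemma weyl_mul_torus (a : Fˣ) : weyl * torus a = torus a⁻¹ * weyl :=
  Subtype.ext <| by simp

lemma weyl_mul_unip_mul_weyl (y : Fˣ) :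
    weyl * unip (↑y⁻¹ : F) * weyl = unip (-y : F) * torus y * weyl * unip (-y : F) :=
  Subtype.ext <| by simp

lemma eq_unip_mul_weyl_mul_unip {g : SL(2, F)} (hc : g 1 0 ≠ 0) :
    g = unip ((g 0 0 + 1) / g 1 0) * weyl * unip (g 1 0) * weyl * unip ((g 1 1 + 1) / g 1 0) := by
  have hdet := g.det_coe
  rw [det_fin_two] at hdet
  refine Matrix.SpecialLinearGroup.ext _ _ fun i j => ?_
  simp only [Matrix.SpecialLinearGroup.coe_mul, coe_unip, coe_weyl, mul_fin_two, mul_zero, zero_mul,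
    add_zero, zero_add, mul_one, one_mul]
  fin_cases i <;> fin_cases j <;>
    simp only [Fin.zero_eta, Fin.mk_one, of_apply, cons_val', cons_val_zero, cons_val_one,
      cons_val_fin_one] <;> field_simp
  · ring
  · linear_combination -hdet
  · ring

lemma weyl_unip_induction {P : SL(2, F) → Prop} (hmul : ∀ g h, P g → P h → P (g * h))
    (hweyl : P weyl) (hunip : ∀ b, P (unip b)) (g : SL(2, F)) : P g := by
  have hbig {g : SL(2, F)} (hc : g 1 0 ≠ 0) : P g := by
    rw [eq_unip_mul_weyl_mul_unip hc]
    exact hmul _ _ (hmul _ _ (hmul _ _ (hmul _ _ (hunip _) hweyl) (hunip _)) hweyl) (hunip _)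
  by_cases hc : g 1 0 = 0
  · have hdet := g.det_coe
    rw [det_fin_two, hc, mul_zero, sub_zero] at hdet
    have hgw : P (g * weyl) := hbig <| by
      simpa [mul_apply] using right_ne_zero_of_mul_eq_one hdet
    have hg : g = g * weyl * (weyl * weyl * weyl) := by
      rw [weyl_mul_weyl, mul_assoc, neg_one_mul, mul_neg, weyl_mul_weyl]; simp
    rw [hg]
    exact hmul _ _ hgw (hmul _ _ (hmul _ _ hweyl hweyl) hweyl)
  · exact hbig hc

end Group

section Weights

variable {F : Type*} [Field F] {V W : Type*} [AddCommGroup V] [Module ℂ V] [AddCommGroup W]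
  [Module ℂ W] (ρ : Representation ℂ SL(2, F) V) (σ : Representation ℂ SL(2, F) W)

lemma eq_one_of_forall_unip (h : ∀ b, ρ (unip b) = 1) (g : SL(2, F)) : ρ g = 1 := by
  have hw : ρ weyl = 1 := by
    have hsq : ρ weyl * ρ weyl = ρ weyl := by
      simpa [h] using congrArg ρ (weyl_mul_unip_mul_weyl (1 : Fˣ))
    exact LinearMap.ext fun v => (ρ.apply_bijective weyl).1 (LinearMap.congr_fun hsq v)
  exact weyl_unip_induction (P := (ρ · = 1))
    (fun g g' hg hg' => by rw [map_mul, hg, hg', one_mul]) hw h g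

variable [Fintype F] (ψ : AddChar F ℂ)

/-- The Fourier projector of `ρ` onto the weight space of `j`, the space of vectors on which every
`unip b` acts as `ψ (j * b)`. -/
noncomputable def weightProj (j : F) : V →ₗ[ℂ] V :=
  (Fintype.card F : ℂ)⁻¹ • ∑ b, ψ (-(j * b)) • ρ (unip b)

/-- The weights of `ρ` with respect to `ψ`: those `j` whose weight space is nonzero. -/
def weights : Set F := {j | weightProj ρ ψ j ≠ 0}

lemma weightProj_apply (j : F) (v : V) :
    weightProj ρ ψ j v = (Fintype.card F : ℂ)⁻¹ • ∑ b, ψ (-(j * b)) • ρ (unip b) v := by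
  simp [weightProj]

lemma weightProj_mem {p : Submodule ℂ V} (hp : ∀ g, ∀ v ∈ p, ρ g v ∈ p) (j : F) {v : V}
    (hv : v ∈ p) : weightProj ρ ψ j v ∈ p := by
  rw [weightProj_apply]
  exact p.smul_mem _ (p.sum_mem fun b _ => p.smul_mem _ (hp _ v hv))

lemma weightProj_apply_eq_zero {j : F} (hj : j ∉ weights ρ ψ) (v : V) :
    weightProj ρ ψ j v = 0 :=
  LinearMap.congr_fun (of_not_not hj : weightProj ρ ψ j = 0) v

lemma weightProj_mulShift (a j : F) :
    weightProj ρ (ψ.mulShift a) j = weightProj ρ ψ (a * j) := by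
  simp [weightProj, mul_assoc]

lemma weights_mulShift (a : F) : weights ρ (ψ.mulShift a) = (a * ·) ⁻¹' weights ρ ψ :=
  Set.ext fun j => by simp [weights, weightProj_mulShift]

lemma weightProj_unip (j b : F) (v : V) :
    weightProj ρ ψ j (ρ (unip b) v) = ψ (j * b) • weightProj ρ ψ j v := by
  rw [weightProj_apply, weightProj_apply, smul_comm (ψ (j * b)), Finset.smul_sum (r := ψ (j * b))]
  congr 1
  refine Fintype.sum_equiv (Equiv.addRight b) _ _ fun c => ?_
  rw [← Module.End.mul_apply, ← map_mul, ← unip_add, smul_smul, ← AddChar.map_add_eq_mul,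
    Equiv.coe_addRight]
  congr 2
  ring

lemma unip_weightProj (j b : F) (v : V) :
    ρ (unip b) (weightProj ρ ψ j v) = ψ (j * b) • weightProj ρ ψ j v := by
  rw [← weightProj_unip, weightProj_apply, weightProj_apply, map_smul, map_sum]
  simp_rw [map_smul, ← Module.End.mul_apply, ← map_mul, ← unip_add, add_comm b]

lemma weightProj_weightProj (j : F) (v : V) :
    weightProj ρ ψ j (weightProj ρ ψ j v) = weightProj ρ ψ j v := by
  rw [weightProj_apply ρ ψ j (weightProj ρ ψ j v)]
  simp_rw [unip_weightProj, smul_smul, ← AddChar.map_add_eq_mul, neg_add_cancel,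
    AddChar.map_zero_eq_one, one_smul, Finset.sum_const, ← Nat.cast_smul_eq_nsmul ℂ]
  exact inv_smul_smul₀ (Nat.cast_ne_zero.mpr Fintype.card_ne_zero) _

lemma torus_weightProj (a : Fˣ) (j : F) (v : V) :
    ρ (torus a) (weightProj ρ ψ (a ^ 2 * j) v) = weightProj ρ ψ j (ρ (torus a) v) := by
  rw [weightProj_apply, weightProj_apply, map_smul, map_sum]
  congr 1
  refine Fintype.sum_equiv (Equiv.mulLeft₀ ((a : F) ^ 2) (by simp)) _ _ fun b => ?_
  rw [map_smul, ← Module.End.mul_apply, ← map_mul, torus_mul_unip, map_mul, Module.End.mul_apply,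
    Equiv.mulLeft₀_apply]
  congr 2
  ring

lemma sq_mul_mem_weights_iff (a : Fˣ) {j : F} :
    (a : F) ^ 2 * j ∈ weights ρ ψ ↔ j ∈ weights ρ ψ := by
  refine not_congr ⟨fun h => LinearMap.ext fun v => ?_, fun h => LinearMap.ext fun v => ?_⟩
  · rw [← ρ.self_inv_apply (torus a) v, ← torus_weightProj, h]; simp
  · apply (ρ.apply_bijective (torus a)).1
    rw [torus_weightProj, h]; simp

variable {ρ σ} in
lemma map_weightProj (f : ρ.IntertwiningMap σ) (j : F) (v : V) :
    f (weightProj ρ ψ j v) = weightProj σ ψ j (f v) := by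
  simp [weightProj_apply, f.isIntertwining]

variable {ρ σ} in
lemma weights_eq_of_equiv (e : ρ.Equiv σ) : weights ρ ψ = weights σ ψ := by
  ext j
  refine not_congr ⟨fun h => LinearMap.ext fun w => ?_, fun h => LinearMap.ext fun v => ?_⟩
  · rw [← e.apply_symm_apply w]
    exact (map_weightProj ψ e.toIntertwiningMap j _).symm.trans (by simp [h])
  · apply e.toLinearEquiv.injective
    exact (map_weightProj ψ e.toIntertwiningMap j v).trans (by simp [h])

lemma weightProj_prod (j : F) (v : V × W) :
    weightProj (ρ.prod σ) ψ j v = (weightProj ρ ψ j v.1, weightProj σ ψ j v.2) :=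
  Prod.ext (map_weightProj ψ (.fst ℂ ρ σ) j v) (map_weightProj ψ (.snd ℂ ρ σ) j v)

lemma weights_prod : weights (ρ.prod σ) ψ ⊆ weights ρ ψ ∪ weights σ ψ := by
  intro j hj
  by_contra h
  rw [Set.mem_union, not_or] at h
  refine hj (LinearMap.ext fun v => ?_)
  rw [weightProj_prod, weightProj_apply_eq_zero ρ ψ h.1, weightProj_apply_eq_zero σ ψ h.2]; rfl

variable {ψ}

lemma sum_weightProj (hψ : ψ.IsPrimitive) (v : V) : ∑ j, weightProj ρ ψ j v = v := by
  classical
  have hsum (b : F) : ∑ j, ψ (-(j * b)) = if b = 0 then (Fintype.card F : ℂ) else 0 := by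
    simpa [neg_eq_zero, apply_ite] using AddChar.sum_mulShift (-b) hψ
  simp_rw [weightProj_apply, ← Finset.smul_sum]
  rw [Finset.sum_comm]
  simp_rw [← Finset.sum_smul, hsum]
  simp [unip_zero]

lemma weightProj_weightProj_of_ne (hψ : ψ.IsPrimitive) {i j : F} (hij : i ≠ j) (v : V) :
    weightProj ρ ψ i (weightProj ρ ψ j v) = 0 := by
  classical
  have hsum : ∑ b, ψ (-(i * b)) * ψ (j * b) = 0 := by
    simp_rw [← AddChar.map_add_eq_mul, ← neg_mul, ← add_mul, mul_comm _ (_ : F)]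
    rw [AddChar.sum_mulShift _ hψ, if_neg (by rw [neg_add_eq_zero]; exact hij), Nat.cast_zero]
  rw [weightProj_apply]
  simp_rw [unip_weightProj, smul_smul]
  rw [← Finset.sum_smul, hsum, zero_smul, smul_zero]

lemma weightProj_torus_eq_zero (hψ : ψ.IsPrimitive) {v : V} (hv : weightProj ρ ψ 1 v = v)
    {x : Fˣ} (hx : (x : F) ^ 2 ≠ 1) : weightProj ρ ψ 1 (ρ (torus x) v) = 0 := by
  rw [← torus_weightProj, ← hv, mul_one, weightProj_weightProj_of_ne ρ hψ hx, map_zero]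

lemma spectrum_unip [FiniteDimensional ℂ V] (hψ : ψ.IsPrimitive) (b : F) :
    spectrum ℂ (ρ (unip b)) = (fun j => ψ (j * b)) '' weights ρ ψ := by
  ext μ
  rw [← Module.End.hasEigenvalue_iff_mem_spectrum]
  constructor
  · intro h
    obtain ⟨w, hw⟩ := h.exists_hasEigenvector
    obtain ⟨j, -, hj⟩ := Finset.exists_ne_zero_of_sum_ne_zero <|
      (sum_weightProj ρ hψ w).symm ▸ hw.2
    have heq := weightProj_unip ρ ψ j b w
    rw [hw.apply_eq_smul, map_smul] at heq
    exact ⟨j, fun h0 => hj (by rw [h0, LinearMap.zero_apply]),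
      (smul_left_injective ℂ hj heq).symm⟩
  · rintro ⟨j, hj, rfl⟩
    obtain ⟨v, hv⟩ := DFunLike.exists_ne hj
    exact Module.End.hasEigenvalue_of_hasEigenvector
      ⟨Module.End.mem_eigenspace_iff.mpr (unip_weightProj ρ ψ j b v), hv⟩

lemma exists_mem_weights_ne_zero_iff (hψ : ψ.IsPrimitive) :
    (∃ j ∈ weights ρ ψ, j ≠ 0) ↔ ∃ g, ρ g ≠ 1 := by
  constructor <;> contrapose!
  · refine fun h j hj => of_not_not fun hj0 => hj (LinearMap.ext fun v => ?_)
    obtain ⟨b, hb⟩ := AddChar.ne_one_iff.mp (hψ hj0)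
    rw [AddChar.mulShift_apply] at hb
    have heq := unip_weightProj ρ ψ j b v
    rw [h, Module.End.one_apply] at heq
    exact of_not_not fun hv => hb (smul_left_injective ℂ hv (by simpa using heq.symm))
  · refine fun h => eq_one_of_forall_unip ρ fun b => LinearMap.ext fun v => ?_
    have hv : v = weightProj ρ ψ 0 v := by
      conv_lhs => rw [← sum_weightProj ρ hψ v]
      exact Fintype.sum_eq_single _ fun j hj =>
        weightProj_apply_eq_zero ρ ψ (fun hmem => hj (h j hmem)) v
    rw [hv, unip_weightProj, zero_mul, AddChar.map_zero_eq_one, one_smul, Module.End.one_apply]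

end Weights

section Bruhat

variable {F : Type*} [Field F] {V : Type*} [AddCommGroup V] [Module ℂ V]
  (ρ : Representation ℂ SL(2, F) V)

/-- The span of the torus orbit of a vector. -/
def torusSpan (v : V) : Submodule ℂ V := Submodule.span ℂ (Set.range fun a => ρ (torus a) v)

lemma mem_torusSpan (a : Fˣ) (v : V) : ρ (torus a) v ∈ torusSpan ρ v :=
  Submodule.subset_span (Set.mem_range_self a)

lemma self_mem_torusSpan (v : V) : v ∈ torusSpan ρ v := by
  simpa using mem_torusSpan ρ 1 v

lemma torusSpan_le_comap {v : V} {g : SL(2, F)} (h : ∀ a, ρ g (ρ (torus a) v) ∈ torusSpan ρ v) :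
    torusSpan ρ v ≤ (torusSpan ρ v).comap (ρ g) :=
  Submodule.span_le.mpr <| Set.range_subset_iff.mpr h

lemma torus_mem_torusSpan (a : Fˣ) {v w : V} (hw : w ∈ torusSpan ρ v) :
    ρ (torus a) w ∈ torusSpan ρ v :=
  torusSpan_le_comap ρ (fun b => by
    rw [← Module.End.mul_apply, ← map_mul, ← map_mul]; exact mem_torusSpan ρ _ v) hw

variable [Fintype F]

lemma unip_torus_weightProj (ψ : AddChar F ℂ) (j b : F) (a : Fˣ) (v : V) :
    ρ (unip b) (ρ (torus a) (weightProj ρ ψ j v)) =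
      ψ (j * ((a : F) ^ 2)⁻¹ * b) • ρ (torus a) (weightProj ρ ψ j v) := by
  have hcomm : unip b * torus a = torus a * unip (((a : F) ^ 2)⁻¹ * b) := by
    rw [torus_mul_unip, mul_inv_cancel_left₀ (by simp)]
  rw [← Module.End.mul_apply, ← map_mul, hcomm, map_mul, Module.End.mul_apply, unip_weightProj,
    map_smul, mul_assoc]

variable {ψ : AddChar F ℂ}

/-- If the span of the torus orbit of a weight vector contains the image of that vector under the
Weyl element, then it is stable under the whole group. -/
def torusSubrep {v : V} {j : F} (hv : weightProj ρ ψ j v = v)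
    (hw : ρ weyl v ∈ torusSpan ρ v) : Subrepresentation ρ where
  toSubmodule := torusSpan ρ v
  apply_mem_toSubmodule g := by
    refine weyl_unip_induction (P := fun g => torusSpan ρ v ≤ (torusSpan ρ v).comap (ρ g))
      (fun g g' hg hg' x hx => ?_) (torusSpan_le_comap ρ fun a => ?_)
      (fun b => torusSpan_le_comap ρ fun a => ?_) g
    · rw [Submodule.mem_comap, map_mul]
      exact hg (hg' hx)
    · rw [← Module.End.mul_apply, ← map_mul, weyl_mul_torus, map_mul]
      exact torus_mem_torusSpan ρ _ hw
    · rw [← hv, unip_torus_weightProj, hv]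
      exact Submodule.smul_mem _ _ (mem_torusSpan ρ a v)

/-- The component of weight `1` of `ρ (torus y * weyl) v`. -/
noncomputable def bruhatCoeff (ψ : AddChar F ℂ) (v : V) (y : Fˣ) : V :=
  weightProj ρ ψ 1 (ρ (torus y) (ρ weyl v))

lemma bruhatCoeff_neg (v : V) (y : Fˣ) :
    bruhatCoeff ρ ψ v (-y) = bruhatCoeff ρ ψ (ρ (-1) v) y := by
  rw [bruhatCoeff, bruhatCoeff, torus_neg]
  simp only [← Module.End.mul_apply, ← map_mul, mul_assoc]
  simp

lemma weyl_mem_torusSpan (hψ : ψ.IsPrimitive)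
    (hwt : weights ρ ψ ⊆ Set.range fun a : Fˣ => (a : F) ^ 2) {v : V}
    (hv : ∀ y, bruhatCoeff ρ ψ v y ∈ Submodule.span ℂ {v}) :
    ρ weyl v ∈ torusSpan ρ v := by
  rw [← sum_weightProj ρ hψ (ρ weyl v)]
  refine Submodule.sum_mem _ fun j _ => ?_
  by_cases hj : j ∈ weights ρ ψ
  · obtain ⟨y, rfl⟩ := hwt hj
    have h := torus_weightProj ρ ψ y 1 (ρ weyl v)
    rw [mul_one] at h
    rw [← ρ.inv_self_apply (torus y) (weightProj ρ ψ _ _), h, ← map_inv]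
    have hmem : bruhatCoeff ρ ψ v y ∈ torusSpan ρ v :=
      (Submodule.span_singleton_le_iff_mem ..).mpr (self_mem_torusSpan ρ v) (hv y)
    exact torus_mem_torusSpan ρ _ hmem
  · rw [weightProj_apply_eq_zero ρ ψ hj]
    exact zero_mem _

variable [DecidableEq F]

lemma sum_eq_zero_add_sum_units_inv {M : Type*} [AddCommMonoid M] (f : F → M) :
    ∑ b, f b = f 0 + ∑ y : Fˣ, f ↑y⁻¹ := by
  rw [Fintype.sum_eq_add_sum_subtype_ne f 0]
  congr 1
  exact (Fintype.sum_equiv ((Equiv.inv Fˣ).trans unitsEquivNeZero) _ _ fun _ => rfl).symm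

-- The vanishing of the component of weight `j` of `ρ weyl v`, with `weyl * unip y⁻¹ * weyl`
-- rewritten through the Bruhat relation `weyl_mul_unip_mul_weyl`.
lemma weightProj_torus_add_sum_bruhatCoeff {v : V} (hv : weightProj ρ ψ 1 v = v) {j : F}
    (hj : j ∉ weights ρ ψ) (x : Fˣ) :
    weightProj ρ ψ 1 (ρ (torus x) (ρ (-1) v)) +
      ∑ y : Fˣ, ψ (-(j * ↑y⁻¹) - (x ^ 2 + 1) * y) • bruhatCoeff ρ ψ v (x * y) = 0 := by
  have hzero : ∑ b, ψ (-(j * b)) • ρ weyl (ρ (unip b) (ρ weyl v)) = 0 := by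
    have h := weightProj_apply_eq_zero ρ ψ hj (ρ weyl v)
    rw [weightProj_apply, smul_eq_zero_iff_right (by simp)] at h
    simpa only [map_sum, map_smul, map_zero] using congrArg (ρ weyl) h
  have hfactor (y : Fˣ) : ρ weyl (ρ (unip ↑y⁻¹) (ρ weyl v)) =
      ψ (-y) • ρ (unip (-y)) (ρ (torus y) (ρ weyl v)) := by
    have h := unip_weightProj ρ ψ 1 (-y) v
    rw [hv, one_mul] at h
    rw [← map_smul, ← map_smul, ← map_smul, ← h]
    simp only [← Module.End.mul_apply, ← map_mul]
    rw [← mul_assoc, weyl_mul_unip_mul_weyl]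
    simp only [mul_assoc]
  have hproj (y : Fˣ) : weightProj ρ ψ 1 (ρ (torus x) (ρ (unip (-y)) (ρ (torus y) (ρ weyl v)))) =
      ψ (-(x ^ 2 * y)) • bruhatCoeff ρ ψ v (x * y) := by
    rw [← Module.End.mul_apply (ρ (torus x)), ← map_mul, torus_mul_unip, map_mul,
      Module.End.mul_apply, weightProj_unip, bruhatCoeff, map_mul torus, map_mul ρ]
    simp
  have h := congrArg (fun w => weightProj ρ ψ 1 (ρ (torus x) w)) hzero
  rw [sum_eq_zero_add_sum_units_inv] at h
  simp only [hfactor] at h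
  simp only [map_add, map_sum, map_smul, hproj, smul_smul, ← AddChar.map_add_eq_mul, map_zero,
    unip_zero, map_one, Module.End.one_apply, mul_zero, neg_zero, AddChar.map_zero_eq_one,
    one_smul] at h
  rw [← weyl_mul_weyl, map_mul, Module.End.mul_apply]
  convert h using 5
  ring

end Bruhat

section Irreducible

open Representation

variable {U V W : Type*} [AddCommGroup U] [Module ℂ U] [AddCommGroup V] [Module ℂ V]
  [AddCommGroup W] [Module ℂ W]

lemma isIrreducible_iff {G : Type*} [Monoid G] (ρ : Representation ℂ G V) :
    IsIrreducible ρ ↔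
      Nontrivial V ∧ ∀ p : Submodule ℂ V, (∀ g, ∀ v ∈ p, ρ g v ∈ p) → p = ⊥ ∨ p = ⊤ := by
  constructor
  · intro h
    refine ⟨?_, fun p hp => ?_⟩
    · by_contra hV
      rw [not_nontrivial_iff_subsingleton] at hV
      exact h.bot_ne_top (Subrepresentation.toSubmodule_injective (Subsingleton.elim _ _))
    · let s : Subrepresentation ρ := ⟨p, fun g v hv => hp g v hv⟩
      exact (h.eq_bot_or_eq_top s).imp (congrArg Subrepresentation.toSubmodule)
        (congrArg Subrepresentation.toSubmodule)
  · rintro ⟨hV, h⟩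
    refine { exists_pair_ne := ⟨⊥, ⊤, fun heq => ?_⟩, eq_bot_or_eq_top := fun s => ?_ }
    · exact bot_ne_top (congrArg Subrepresentation.toSubmodule heq : (⊥ : Submodule ℂ V) = ⊤)
    · exact (h s.toSubmodule fun g v hv => s.apply_mem_toSubmodule g hv).imp
        (Subrepresentation.toSubmodule_injective ·) (Subrepresentation.toSubmodule_injective ·)

lemma isIrreducible_of_equiv {G : Type*} [Monoid G] {ρ : Representation ℂ G V}
    {σ : Representation ℂ G W} (e : ρ.Equiv σ) (hρ : ρ.IsIrreducible) : σ.IsIrreducible := by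
  rw [isIrreducible_iff] at hρ ⊢
  obtain ⟨hV, hsub⟩ := hρ
  refine ⟨e.toLinearEquiv.injective.nontrivial, fun p hp => ?_⟩
  let comap : Submodule ℂ W ≃o Submodule ℂ V := (Submodule.orderIsoMapComap e.toLinearEquiv).symm
  refine (hsub (comap p) fun g v hv => ?_).imp (map_eq_bot_iff comap).mp (map_eq_top_iff comap).mp
  change e (ρ g v) ∈ p
  exact (e.toIntertwiningMap.isIntertwining _ _ g v).symm ▸ hp g _ hv

/-- The representation obtained from `ρ` by transport of structure along a linear equivalence. -/
def conjRep {G : Type*} [Monoid G] (ρ : Representation ℂ G V) (e : V ≃ₗ[ℂ] W) :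
    Representation ℂ G W :=
  (e.conjRingEquiv : Module.End ℂ V →* Module.End ℂ W).comp ρ

/-- The equivalence between `ρ` and its transport along `e`. -/
def equivConjRep {G : Type*} [Monoid G] (ρ : Representation ℂ G V) (e : V ≃ₗ[ℂ] W) :
    ρ.Equiv (conjRep ρ e) :=
  .mk e fun g => by ext v; simp [conjRep]

lemma map_neg_one_eq_or_eq_neg {F : Type*} [Field F] (ρ : Representation ℂ SL(2, F) V)
    [IsIrreducible ρ] : (∀ v, ρ (-1) v = v) ∨ ∀ v, ρ (-1) v = -v := by
  let f : IntertwiningMap ρ ρ :=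
    IntertwiningMap.centralMul ρ (-1) (by simp [Submonoid.mem_center_iff]) - .id ρ
  have hf (v : V) : f v = ρ (-1) v - v := rfl
  refine (IsIrreducible.injective_or_eq_zero f).symm.imp (fun h v => ?_) (fun h v => ?_)
  · rw [← sub_eq_zero, ← hf, h]; rfl
  · have hsq : ρ (-1) (ρ (-1) v) = v := by
      rw [← Module.End.mul_apply, ← map_mul]; simp
    have hfv : f (ρ (-1) v + v) = 0 := by rw [hf, map_add, hsq]; abel
    exact eq_neg_of_add_eq_zero_left (h (hfv.trans (map_zero f).symm))

lemma nonempty_equiv_of_intertwiningMap_ne_zero {G : Type*} [Monoid G]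
    {τ : Representation ℂ G U} {ρ : Representation ℂ G V} {σ : Representation ℂ G W}
    [IsIrreducible ρ] [IsIrreducible σ] [FiniteDimensional ℂ U] [FiniteDimensional ℂ V]
    {φ : τ.IntertwiningMap ρ} {χ : τ.IntertwiningMap σ} (hφ : φ ≠ 0) (hχ : χ ≠ 0)
    (hrank : Module.finrank ℂ U ≤ Module.finrank ℂ V) : Nonempty (ρ.Equiv σ) := by
  have hsurj := (IsIrreducible.surjective_or_eq_zero φ).resolve_right hφ
  have heq := hrank.antisymm (LinearMap.finrank_le_finrank_of_surjective (f := φ.toLinearMap) hsurj)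
  have hinj : Function.Injective φ :=
    (LinearMap.injective_iff_surjective_of_finrank_eq_finrank (f := φ.toLinearMap) heq).mpr hsurj
  let e : τ.Equiv ρ := φ.ofBijective ⟨hinj, hsurj⟩
  have hne : χ.comp e.symm.toIntertwiningMap ≠ 0 := fun h => hχ <| IntertwiningMap.ext <|
    LinearMap.ext fun u => by simpa using DFunLike.congr_fun h (e u)
  exact ⟨IntertwiningMap.ofBijective _ ((IsIrreducible.bijective_or_eq_zero _).resolve_right hne)⟩

end Irreducible

section Seven

instance fact_prime_seven : Fact (Nat.Prime 7) := ⟨by norm_num⟩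

/-- The unit `2` of `ZMod 7`; together with `-1` it generates the unit group. -/
def unitTwo : (ZMod 7)ˣ := ⟨2, 4, by decide, by decide⟩

lemma univ_units_zmod_seven : (Finset.univ : Finset (ZMod 7)ˣ) =
    {1, -1, unitTwo, -unitTwo, unitTwo ^ 2, -unitTwo ^ 2} := by
  decide

lemma units_zmod_seven_cases (a : (ZMod 7)ˣ) :
    ∃ b ∈ ({1, unitTwo, unitTwo ^ 2} : Finset (ZMod 7)ˣ), a = b ∨ a = -b := by
  revert a; decide

lemma sum_units_zmod_seven {M : Type*} [AddCommMonoid M] (f : (ZMod 7)ˣ → M) :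
    ∑ y, f y = (f 1 + f (-1)) + (f unitTwo + f (-unitTwo)) +
      (f (unitTwo ^ 2) + f (-unitTwo ^ 2)) := by
  rw [univ_units_zmod_seven, Finset.sum_insert (by decide), Finset.sum_insert (by decide),
    Finset.sum_insert (by decide), Finset.sum_insert (by decide), Finset.sum_insert (by decide),
    Finset.sum_singleton]
  abel

/-- Twice the even (`ε = 1`) or odd (`ε = -1`) part of `n ↦ ψ (-n)`. -/
def parityPart (ψ : AddChar (ZMod 7) ℂ) (ε : ℂ) (n : ZMod 7) : ℂ := ψ (-n) + ε * ψ n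

variable {V : Type*} [AddCommGroup V] [Module ℂ V] {ρ : Representation ℂ SL(2, ZMod 7) V}
  {ψ : AddChar (ZMod 7) ℂ} {v : V}

lemma bruhatCoeff_relation {ε : ℂ} (hv : weightProj ρ ψ 1 v = v) (hε : ρ (-1) v = ε • v)
    {j : ZMod 7} (hj : j ∉ weights ρ ψ) (x : (ZMod 7)ˣ) {l m n : ZMod 7}
    (hl : j + (x ^ 2 + 1) = l) (hm : 4 * j + 2 * (x ^ 2 + 1) = m)
    (hn : 2 * j + 4 * (x ^ 2 + 1) = n) :
    ε • weightProj ρ ψ 1 (ρ (torus x) v) + (parityPart ψ ε l • bruhatCoeff ρ ψ v x +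
      parityPart ψ ε m • bruhatCoeff ρ ψ v (x * unitTwo) +
      parityPart ψ ε n • bruhatCoeff ρ ψ v (x * unitTwo ^ 2)) = 0 := by
  have hneg (y : (ZMod 7)ˣ) : bruhatCoeff ρ ψ v (-y) = ε • bruhatCoeff ρ ψ v y := by
    rw [bruhatCoeff_neg, hε]; simp [bruhatCoeff]
  have hpair (y : (ZMod 7)ˣ) (n : ZMod 7) (hn : j * ↑y⁻¹ + (x ^ 2 + 1) * y = n) :
      ψ (-(j * ↑y⁻¹) - (x ^ 2 + 1) * y) • bruhatCoeff ρ ψ v (x * y) +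
        ψ (-(j * ↑(-y)⁻¹) - (x ^ 2 + 1) * ↑(-y)) • bruhatCoeff ρ ψ v (x * -y) =
      parityPart ψ ε n • bruhatCoeff ρ ψ v (x * y) := by
    have hfst : -(j * ↑y⁻¹) - (x ^ 2 + 1) * y = -n := by rw [← hn]; ring
    have hsnd : -(j * ↑(-y)⁻¹) - ((x : ZMod 7) ^ 2 + 1) * ↑(-y) = n := by
      rw [← hn, inv_neg, Units.val_neg, Units.val_neg]; ring
    rw [hfst, hsnd, mul_neg, hneg, smul_smul, ← add_smul, parityPart, mul_comm ε]
  have h := weightProj_torus_add_sum_bruhatCoeff ρ hv hj x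
  rw [sum_units_zmod_seven, hpair 1 l (by simpa using hl),
    hpair unitTwo m (by rw [← hm]; change j * 4 + _ * 2 = _; ring),
    hpair (unitTwo ^ 2) n (by rw [← hn]; change j * 2 + _ * 4 = _; ring), hε] at h
  simpa using h

lemma bruhatCoeff_system (hψ : ψ.IsPrimitive) (hwt : weights ρ ψ ⊆ {1, 2, 4})
    (hv : weightProj ρ ψ 1 v = v) {ε : ℂ} (hε : ρ (-1) v = ε • v) {a b c : V}
    (ha : bruhatCoeff ρ ψ v 1 = a) (hb : bruhatCoeff ρ ψ v unitTwo = b)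
    (hc : bruhatCoeff ρ ψ v (unitTwo ^ 2) = c) :
    ε • v + (parityPart ψ ε 2 • a + parityPart ψ ε 4 • b + parityPart ψ ε 1 • c) = 0 ∧
    ε • v + (parityPart ψ ε (-2) • a + parityPart ψ ε 2 • b + parityPart ψ ε 0 • c) = 0 ∧
    ε • v + (parityPart ψ ε 0 • a + parityPart ψ ε (-4) • b + parityPart ψ ε 4 • c) = 0 ∧
    ε • v + (parityPart ψ ε 1 • a + parityPart ψ ε 0 • b + parityPart ψ ε (-1) • c) = 0 ∧
    parityPart ψ ε (-1) • a + parityPart ψ ε (-2) • b + parityPart ψ ε (-4) • c = 0 := by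
  have hrel {j : ZMod 7} (hj : j ∉ ({1, 2, 4} : Finset (ZMod 7))) :=
    bruhatCoeff_relation hv hε (j := j) fun h => hj (by simpa using hwt h)
  have hone : weightProj ρ ψ 1 (ρ (torus 1) v) = v := by simp [hv]
  have htwo := weightProj_torus_eq_zero ρ hψ hv (x := unitTwo) (by decide)
  have hcube : unitTwo * unitTwo ^ 2 = 1 := by decide
  have h₀ := hrel (j := 0) (by decide) 1 (l := 2) (m := 4) (n := 1)
    (by decide) (by decide) (by decide)
  have h₃ := hrel (j := 3) (by decide) 1 (l := -2) (m := 2) (n := 0)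
    (by decide) (by decide) (by decide)
  have h₅ := hrel (j := 5) (by decide) 1 (l := 0) (m := -4) (n := 4)
    (by decide) (by decide) (by decide)
  have h₆ := hrel (j := 6) (by decide) 1 (l := 1) (m := 0) (n := -1)
    (by decide) (by decide) (by decide)
  have h₂ := hrel (j := 0) (by decide) unitTwo (l := -2) (m := -4) (n := -1)
    (by decide) (by decide) (by decide)
  rw [htwo, smul_zero, zero_add, hcube, ← pow_two, ha, hb, hc] at h₂
  simp only [hone, one_mul, ha, hb, hc] at h₀ h₃ h₅ h₆
  exact ⟨h₀, h₃, h₅, h₆, by rw [← h₂]; abel⟩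

lemma eq_zero_of_map_neg_one_eq_neg (hψ : ψ.IsPrimitive)
    (hwt : weights ρ ψ ⊆ {1, 2, 4}) (hv : weightProj ρ ψ 1 v = v) (hneg : ρ (-1) v = -v) :
    v = 0 := by
  have hodd (n : ZMod 7) : parityPart ψ (-1) (-n) = -parityPart ψ (-1) n := by
    simp only [parityPart, neg_neg]; ring
  have hzero : parityPart ψ (-1) 0 = 0 := by simp [parityPart]
  obtain ⟨h₀, h₃, h₅, h₆, h₂⟩ :=
    bruhatCoeff_system hψ hwt hv (ε := -1) (by rw [hneg, neg_one_smul]) rfl rfl rfl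
  simp only [hodd, hzero] at h₃ h₅ h₆ h₂
  linear_combination (norm := module) (-(1 / 4) : ℂ) • (h₀ + h₃ + h₅ + h₆ + h₂)

lemma bruhatCoeff_mem_span_singleton (hψ : ψ.IsPrimitive) (hwt : weights ρ ψ ⊆ {1, 2, 4})
    (hv : weightProj ρ ψ 1 v = v) (hpos : ρ (-1) v = v) (y : (ZMod 7)ˣ) :
    bruhatCoeff ρ ψ v y ∈ Submodule.span ℂ {v} := by
  rcases eq_or_ne v 0 with rfl | hv0
  · simp [bruhatCoeff]
  have heven (n : ZMod 7) : parityPart ψ 1 (-n) = parityPart ψ 1 n := by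
    simp only [parityPart, neg_neg]; ring
  have hzero : parityPart ψ 1 0 = 2 := by simp [parityPart]; norm_num
  obtain ⟨a, ha⟩ : ∃ a, bruhatCoeff ρ ψ v 1 = a := ⟨_, rfl⟩
  obtain ⟨b, hb⟩ : ∃ b, bruhatCoeff ρ ψ v unitTwo = b := ⟨_, rfl⟩
  obtain ⟨c, hc⟩ : ∃ c, bruhatCoeff ρ ψ v (unitTwo ^ 2) = c := ⟨_, rfl⟩
  obtain ⟨h₀, h₃, h₅, h₆, h₂⟩ :=
    bruhatCoeff_system hψ hwt hv (ε := 1) (by rw [hpos, one_smul]) ha hb hc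
  simp only [heven, hzero] at h₃ h₅ h₆ h₂
  have htotal : a + b + c = -v := by
    linear_combination (norm := module) (1 / 2 : ℂ) • (h₃ + h₅ + h₆ - h₀ - h₂)
  have hmem {r : ℂ} {w : V} (h : (2 - r) • w = (r - 1) • v) : w ∈ Submodule.span ℂ {v} := by
    have hr : 2 - r ≠ 0 := fun hr => hv0 <| by
      linear_combination (norm := module) hr • w - h + hr • v
    rw [← Submodule.smul_mem_iff _ hr, h]
    exact Submodule.smul_mem _ _ (Submodule.mem_span_singleton_self v)
  have hmem₁ : a ∈ Submodule.span ℂ {v} := hmem (r := parityPart ψ 1 4) <| by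
    linear_combination (norm := module) h₅ - parityPart ψ 1 4 • htotal
  have hmem₂ : b ∈ Submodule.span ℂ {v} := hmem (r := parityPart ψ 1 1) <| by
    linear_combination (norm := module) h₆ - parityPart ψ 1 1 • htotal
  have hmem₄ : c ∈ Submodule.span ℂ {v} := hmem (r := parityPart ψ 1 2) <| by
    linear_combination (norm := module) h₃ - parityPart ψ 1 2 • htotal
  obtain ⟨x, hx, hy⟩ := units_zmod_seven_cases y
  have hyx : bruhatCoeff ρ ψ v y = bruhatCoeff ρ ψ v x := by
    obtain rfl | rfl := hy
    exacts [rfl, by rw [bruhatCoeff_neg, hpos]]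
  fin_cases hx
  · simpa [hyx, ha]
  · simpa [hyx, hb]
  · simpa [hyx, hc]

open Representation

lemma finrank_torusSpan_le (hpos : ρ (-1) v = v) : Module.finrank ℂ (torusSpan ρ v) ≤ 3 := by
  have hrange : (Set.range fun a => ρ (torus a) v) =
      Set.range fun b : ({1, unitTwo, unitTwo ^ 2} : Finset (ZMod 7)ˣ) => ρ (torus b) v := by
    refine (Set.range_subset_iff.mpr fun a => ?_).antisymm
      (Set.range_subset_iff.mpr fun b => ⟨b, rfl⟩)
    obtain ⟨b, hb, rfl | rfl⟩ := units_zmod_seven_cases a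
    · exact ⟨⟨a, hb⟩, rfl⟩
    · have hneg : torus (-b) = torus b * -1 := by simp [torus_neg]
      exact ⟨⟨b, hb⟩, by rw [hneg, map_mul, Module.End.mul_apply, hpos]⟩
  rw [torusSpan, hrange]
  exact (finrank_range_le_card _).trans_eq (by decide)

lemma map_neg_one_eq_self [IsIrreducible ρ] (hψ : ψ.IsPrimitive)
    (hwt : weights ρ ψ ⊆ {1, 2, 4}) (hone : 1 ∈ weights ρ ψ) (v : V) : ρ (-1) v = v := by
  refine (map_neg_one_eq_or_eq_neg ρ).resolve_right (fun hneg => ?_) v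
  exact hone <| LinearMap.ext fun w => eq_zero_of_map_neg_one_eq_neg hψ hwt
    (weightProj_weightProj ρ ψ 1 w) (hneg _)

theorem nonempty_equiv_of_weights_subset {W : Type*} [AddCommGroup W] [Module ℂ W]
    {σ : Representation ℂ SL(2, ZMod 7) W} [IsIrreducible ρ] [IsIrreducible σ]
    (hψ : ψ.IsPrimitive) (hrank : Module.finrank ℂ V = 3)
    (hρ : weights ρ ψ ⊆ {1, 2, 4}) (hρ1 : 1 ∈ weights ρ ψ)
    (hσ : weights σ ψ ⊆ {1, 2, 4}) (hσ1 : 1 ∈ weights σ ψ) : Nonempty (ρ.Equiv σ) := by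
  obtain ⟨v, hv⟩ := DFunLike.exists_ne hρ1
  obtain ⟨w, hw⟩ := DFunLike.exists_ne hσ1
  let τ := ρ.prod σ
  let u : V × W := weightProj τ ψ 1 (v, w)
  have hu : weightProj τ ψ 1 u = u := weightProj_weightProj τ ψ 1 _
  have hτ : weights τ ψ ⊆ {1, 2, 4} := (weights_prod ρ σ ψ).trans (Set.union_subset hρ hσ)
  have hpos : τ (-1) u = u :=
    Prod.ext (map_neg_one_eq_self hψ hρ hρ1 _) (map_neg_one_eq_self hψ hσ hσ1 _)
  have hsq : ({1, 2, 4} : Set (ZMod 7)) ⊆ Set.range fun a : (ZMod 7)ˣ => (a : ZMod 7) ^ 2 := by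
    rintro _ (rfl | rfl | rfl)
    exacts [⟨1, by decide⟩, ⟨-unitTwo ^ 2, by decide⟩, ⟨unitTwo, by decide⟩]
  let M := torusSubrep τ hu <| weyl_mem_torusSpan τ hψ (hτ.trans hsq)
    (bruhatCoeff_mem_span_singleton hψ hτ hu hpos)
  have hM : Module.finrank ℂ M.toSubmodule ≤ 3 := finrank_torusSpan_le hpos
  let incl : M.toRepresentation.IntertwiningMap τ := ⟨M.toSubmodule.subtype, fun _ => rfl⟩
  let u' : M.toSubmodule := ⟨u, self_mem_torusSpan τ u⟩
  have hu' : u = (weightProj ρ ψ 1 v, weightProj σ ψ 1 w) := weightProj_prod ρ σ ψ 1 (v, w)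
  have hfst : (IntertwiningMap.fst ℂ ρ σ).comp incl ≠ 0 := fun h =>
    hv <| (congrArg Prod.fst hu').symm.trans (DFunLike.congr_fun h u')
  have hsnd : (IntertwiningMap.snd ℂ ρ σ).comp incl ≠ 0 := fun h =>
    hw <| (congrArg Prod.snd hu').symm.trans (DFunLike.congr_fun h u')
  have : FiniteDimensional ℂ M.toSubmodule :=
    FiniteDimensional.span_of_finite ℂ (Set.finite_range _)
  have : FiniteDimensional ℂ V := Module.finite_of_finrank_pos (by omega)
  exact nonempty_equiv_of_intertwiningMap_ne_zero hfst hsnd (hM.trans hrank.ge)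

end Seven

section GaussSum

variable {F : Type*} [Field F] [Fintype F] [DecidableEq F] {ψ : AddChar F ℂ}

variable (F) in
/-- The quadratic character of `F` with complex values. -/
noncomputable def quadChar : MulChar F ℂ := (quadraticChar F).ringHomComp (Int.castRingHom ℂ)

lemma isQuadratic_quadChar : (quadChar F).IsQuadratic := (quadraticChar_isQuadratic F).comp _

lemma quadChar_ne_one (hF : ringChar F ≠ 2) : quadChar F ≠ 1 :=
  (MulChar.ringHomComp_ne_one_iff Int.cast_injective).mpr (quadraticChar_ne_one hF)

lemma quadChar_inv (a : F) : quadChar F a⁻¹ = quadChar F a := by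
  rw [← MulChar.inv_apply', isQuadratic_quadChar.inv]

lemma quadChar_mul_self {a : F} (ha : a ≠ 0) : quadChar F a * quadChar F a = 1 := by
  nth_rw 1 [← quadChar_inv, ← map_mul, inv_mul_cancel₀ ha, map_one]

lemma gaussSum_quadChar_sq (hF : ringChar F ≠ 2) (hψ : ψ.IsPrimitive) :
    gaussSum (quadChar F) ψ ^ 2 = quadChar F (-1) * Fintype.card F :=
  gaussSum_sq (quadChar_ne_one hF) isQuadratic_quadChar hψ

lemma gaussSum_quadChar_ne_zero (hF : ringChar F ≠ 2) (hψ : ψ.IsPrimitive) :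
    gaussSum (quadChar F) ψ ≠ 0 :=
  gaussSum_ne_zero_of_nontrivial (Nat.cast_ne_zero.mpr Fintype.card_ne_zero) (quadChar_ne_one hF) hψ

lemma sum_mul_sq (hF : ringChar F ≠ 2) (hψ : ψ.IsPrimitive) {A : F} (hA : A ≠ 0) :
    ∑ x, ψ (A * x ^ 2) = quadChar F A * gaussSum (quadChar F) ψ := by
  have hcard (t : F) : ((Finset.univ.filter fun x => x ^ 2 = t).card : ℂ) = quadChar F t + 1 := by
    have h := quadraticChar_card_sqrts hF t
    rw [Set.toFinset_ofPred] at h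
    change _ = ((quadraticChar F t : ℤ) : ℂ) + 1
    exact_mod_cast congrArg (Int.cast : ℤ → ℂ) h
  have hshift : quadChar F A * gaussSum (quadChar F) (ψ.mulShift A) = gaussSum (quadChar F) ψ :=
    gaussSum_mulShift (quadChar F) ψ (Units.mk0 A hA)
  calc ∑ x, ψ (A * x ^ 2)
      = ∑ t, (quadChar F t + 1) * ψ (A * t) := by
        rw [← Finset.sum_fiberwise Finset.univ (· ^ 2)]
        refine Finset.sum_congr rfl fun t _ => ?_
        rw [← hcard, ← nsmul_eq_mul]
        exact Finset.sum_eq_card_nsmul fun x hx => by rw [(Finset.mem_filter.mp hx).2]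
    _ = gaussSum (quadChar F) (ψ.mulShift A) + ∑ t, ψ (t * A) := by
        simp_rw [add_mul, one_mul, Finset.sum_add_distrib, mul_comm _ A]; rfl
    _ = quadChar F A * gaussSum (quadChar F) ψ := by
        rw [AddChar.sum_mulShift A hψ, if_neg hA, Nat.cast_zero, add_zero, ← hshift, ← mul_assoc,
          quadChar_mul_self hA, one_mul]

lemma sum_quadratic (hF : ringChar F ≠ 2) (hψ : ψ.IsPrimitive) {A : F} (hA : A ≠ 0) (B : F) :
    ∑ x, ψ (A * x ^ 2 - 2 * B * x) =
      quadChar F A * gaussSum (quadChar F) ψ * ψ (-(B ^ 2 / A)) := by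
  rw [← sum_mul_sq hF hψ hA, Finset.sum_mul]
  refine Fintype.sum_equiv (Equiv.subRight (B / A)) _ _ fun x => ?_
  rw [← AddChar.map_add_eq_mul, Equiv.subRight_apply]
  congr 1
  field_simp
  ring

lemma sum_linear (hF : ringChar F ≠ 2) (hψ : ψ.IsPrimitive) (B : F) :
    ∑ x, ψ (-(2 * B * x)) = if B = 0 then (Fintype.card F : ℂ) else 0 := by
  have h := AddChar.sum_mulShift (-(2 * B)) hψ
  simp_rw [mul_neg, mul_comm _ (2 * B), neg_eq_zero, mul_eq_zero, Ring.two_ne_zero hF,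
    false_or] at h
  exact_mod_cast h

end GaussSum

section OddFunctions

variable {F : Type*} [Field F]

variable (F) in
/-- The space of odd functions on `F`. -/
def oddFunctions : Submodule ℂ (F → ℂ) where
  carrier := {f | ∀ x, f (-x) = -f x}
  zero_mem' _ := by simp
  add_mem' hf hg x := by simp [hf x, hg x, add_comm]
  smul_mem' c f hf x := by simp [hf x]

lemma oddFunctions_apply_zero (f : oddFunctions F) : (f : F → ℂ) 0 = 0 :=
  self_eq_neg.mp <| by simpa using f.2 0

variable [DecidableEq F]

/-- The odd function `δ_x - δ_{-x}`. -/
def oddDelta (x : F) : oddFunctions F :=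
  ⟨Pi.single x 1 - Pi.single (-x) 1, fun y => by simp [Pi.single_apply, neg_eq_iff_eq_neg]⟩

lemma oddDelta_apply (x y : F) :
    (oddDelta x : F → ℂ) y = (if y = x then 1 else 0) - if y = -x then 1 else 0 := by
  simp [oddDelta, Pi.single_apply]

lemma oddDelta_apply_self (hF : ringChar F ≠ 2) {x : F} (hx : x ≠ 0) :
    (oddDelta x : F → ℂ) x = 1 := by
  have hneg : x ≠ -x := fun h => hx ((Ring.eq_self_iff_eq_zero_of_char_ne_two hF).mp h.symm)
  simp [oddDelta_apply, hneg]

lemma two_smul_eq_sum_oddDelta [Fintype F] (f : oddFunctions F) :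
    (2 : ℂ) • f = ∑ x, (f : F → ℂ) x • oddDelta x := by
  ext y
  have hneg (x : F) : y = -x ↔ -y = x := neg_eq_iff_eq_neg.symm
  simp [oddDelta_apply, mul_sub, hneg, f.2 y, two_mul]

end OddFunctions

section Weil

variable {F : Type*} [Field F] [Fintype F] [DecidableEq F] (ψ : AddChar F ℂ)

/-- The kernel of the operator by which `g` acts in the Weil representation on functions on `F`:
`g` maps `f` to `fun y => ∑ x, weilKernel ψ g y x * f x`. On the big cell this is a Gaussian
integral operator whose phase is the generating function of the linear map `g`. -/
noncomputable def weilKernel (g : SL(2, F)) : Matrix F F ℂ := .of fun y x =>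
  if g 1 0 = 0 then
    if x = g 0 0 * y then quadChar F (g 0 0) * ψ (g 0 0 * g 0 1 * y ^ 2) else 0
  else
    quadChar F (g 1 0) * (gaussSum (quadChar F) ψ)⁻¹ *
      ψ ((g 0 0 * y ^ 2 - 2 * x * y + g 1 1 * x ^ 2) / g 1 0)

variable {ψ}

lemma weilKernel_of_eq_zero {g : SL(2, F)} (hc : g 1 0 = 0) (y x : F) :
    weilKernel ψ g y x =
      if x = g 0 0 * y then quadChar F (g 0 0) * ψ (g 0 0 * g 0 1 * y ^ 2) else 0 := by
  rw [weilKernel, of_apply, if_pos hc]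

lemma weilKernel_of_ne_zero {g : SL(2, F)} (hc : g 1 0 ≠ 0) (y x : F) :
    weilKernel ψ g y x = quadChar F (g 1 0) * (gaussSum (quadChar F) ψ)⁻¹ *
      ψ ((g 0 0 * y ^ 2 - 2 * x * y + g 1 1 * x ^ 2) / g 1 0) := by
  rw [weilKernel, of_apply, if_neg hc]

lemma weilKernel_unip (b y x : F) :
    weilKernel ψ (unip b) y x = if x = y then ψ (b * y ^ 2) else 0 := by
  rw [weilKernel_of_eq_zero (by simp)]; simp

lemma weilKernel_torus (a : Fˣ) (y x : F) :
    weilKernel ψ (torus a) y x = if x = a * y then quadChar F a else 0 := by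
  rw [weilKernel_of_eq_zero (by simp)]; simp

lemma weilKernel_weyl (y x : F) :
    weilKernel ψ weyl y x = (gaussSum (quadChar F) ψ)⁻¹ * ψ (-(2 * x * y)) := by
  rw [weilKernel_of_ne_zero (by simp)]; simp

lemma weilKernel_one : weilKernel ψ 1 = 1 := by
  ext y x
  rw [← unip_zero, weilKernel_unip, one_apply]
  simp [eq_comm]

lemma weilKernel_mul_unip_apply (g : SL(2, F)) (b y x : F) :
    weilKernel ψ (g * unip b) y x = weilKernel ψ g y x * ψ (b * x ^ 2) := by
  have h00 : (g * unip b) 0 0 = g 0 0 := by simp [mul_apply]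
  have h01 : (g * unip b) 0 1 = g 0 0 * b + g 0 1 := by simp [mul_apply]
  have h10 : (g * unip b) 1 0 = g 1 0 := by simp [mul_apply]
  have h11 : (g * unip b) 1 1 = g 1 0 * b + g 1 1 := by simp [mul_apply]
  by_cases hc : g 1 0 = 0
  · rw [weilKernel_of_eq_zero hc, weilKernel_of_eq_zero (h10.trans hc), h00, h01, ite_mul, zero_mul]
    refine ite_congr rfl (fun hx => ?_) fun _ => rfl
    rw [hx, mul_assoc (quadChar F _) (ψ _), ← AddChar.map_add_eq_mul]
    congr 2
    ring
  · rw [weilKernel_of_ne_zero hc, weilKernel_of_ne_zero (h10.trans_ne hc), h00, h10, h11,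
      mul_assoc _ (ψ _), ← AddChar.map_add_eq_mul]
    congr 2
    field_simp
    ring

lemma weilKernel_mul_weyl_apply (g : SL(2, F)) (y x : F) :
    weilKernel ψ (g * weyl) y x =
      if g 1 1 = 0 then
        if x = g 0 1 * y then quadChar F (g 0 1) * ψ (-(g 0 0 * g 0 1 * y ^ 2)) else 0
      else quadChar F (g 1 1) * (gaussSum (quadChar F) ψ)⁻¹ *
        ψ ((g 0 1 * y ^ 2 - 2 * x * y - g 1 0 * x ^ 2) / g 1 1) := by
  simp [weilKernel, mul_apply, sub_eq_add_neg, mul_comm (g 0 1)]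

lemma weilKernel_mul_weyl_of_one_zero_eq_zero {g : SL(2, F)} (hc : g 1 0 = 0) :
    weilKernel ψ (g * weyl) = weilKernel ψ g * weilKernel ψ weyl := by
  ext y x
  have hdet := g.det_coe
  rw [det_fin_two, hc, mul_zero, sub_zero] at hdet
  have hd : g 1 1 ≠ 0 := right_ne_zero_of_mul_eq_one hdet
  have hphase : (g 0 1 * y ^ 2 - 2 * x * y - g 1 0 * x ^ 2) / g 1 1 =
      (g 1 1)⁻¹ * g 0 1 * y ^ 2 + -(2 * x * ((g 1 1)⁻¹ * y)) := by
    rw [hc]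
    field_simp
    ring
  rw [weilKernel_mul_weyl_apply, mul_apply, if_neg hd]
  simp only [weilKernel_of_eq_zero hc, weilKernel_weyl, ite_mul, zero_mul, Finset.sum_ite_eq',
    Finset.mem_univ, if_true]
  rw [eq_inv_of_mul_eq_one_left hdet, quadChar_inv, hphase, AddChar.map_add_eq_mul]
  ring

lemma weilKernel_mul_weilKernel_weyl_apply {g : SL(2, F)} (hc : g 1 0 ≠ 0) (y x : F) :
    (weilKernel ψ g * weilKernel ψ weyl) y x =
      quadChar F (g 1 0) * (gaussSum (quadChar F) ψ ^ 2)⁻¹ * ψ (g 0 0 * y ^ 2 / g 1 0) *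
        ∑ z, ψ (g 1 1 / g 1 0 * z ^ 2 - 2 * (y / g 1 0 + x) * z) := by
  rw [mul_apply, Finset.mul_sum]
  refine Finset.sum_congr rfl fun z _ => ?_
  have hphase : (g 0 0 * y ^ 2 - 2 * z * y + g 1 1 * z ^ 2) / g 1 0 + -(2 * x * z) =
      g 0 0 * y ^ 2 / g 1 0 + (g 1 1 / g 1 0 * z ^ 2 - 2 * (y / g 1 0 + x) * z) := by
    field_simp
    ring
  have hadd := congrArg ψ hphase
  rw [AddChar.map_add_eq_mul, AddChar.map_add_eq_mul ψ (g 0 0 * y ^ 2 / g 1 0)] at hadd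
  rw [weilKernel_of_ne_zero hc, weilKernel_weyl, sq (gaussSum _ _), mul_inv]
  linear_combination quadChar F (g 1 0) * (gaussSum (quadChar F) ψ)⁻¹ *
    (gaussSum (quadChar F) ψ)⁻¹ * hadd

lemma weilKernel_mul_weyl_of_one_one_eq_zero (hF : ringChar F ≠ 2) (hψ : ψ.IsPrimitive)
    {g : SL(2, F)} (hd : g 1 1 = 0) :
    weilKernel ψ (g * weyl) = weilKernel ψ g * weilKernel ψ weyl := by
  ext y x
  have hdet := g.det_coe
  rw [det_fin_two, hd, mul_zero, zero_sub, ← neg_mul] at hdet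
  have hc : g 1 0 ≠ 0 := right_ne_zero_of_mul_eq_one hdet
  have hb : g 0 1 = -(g 1 0)⁻¹ := by rw [← eq_inv_of_mul_eq_one_left hdet, neg_neg]
  have hχ : quadChar F (g 0 1) = quadChar F (g 1 0) * quadChar F (-1) := by
    rw [hb, neg_eq_neg_one_mul, map_mul, quadChar_inv, mul_comm]
  have hx : y / g 1 0 + x = 0 ↔ x = g 0 1 * y := by
    rw [hb, neg_mul, ← div_eq_inv_mul, add_comm, add_eq_zero_iff_eq_neg]
  have hphase : -(g 0 0 * g 0 1 * y ^ 2) = g 0 0 * y ^ 2 / g 1 0 := by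
    rw [hb]
    field_simp
  have hcard : (quadChar F (-1) * Fintype.card F : ℂ)⁻¹ * Fintype.card F = quadChar F (-1) := by
    rw [mul_inv, inv_mul_cancel_right₀ (Nat.cast_ne_zero.mpr Fintype.card_ne_zero),
      inv_eq_of_mul_eq_one_left (quadChar_mul_self (neg_ne_zero.mpr one_ne_zero))]
  rw [weilKernel_mul_weyl_apply, weilKernel_mul_weilKernel_weyl_apply hc]
  simp_rw [hd, zero_div, zero_mul, zero_sub, sum_linear hF hψ, if_true, hx, hχ, hphase,
    gaussSum_quadChar_sq hF hψ, mul_ite, mul_zero]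
  refine ite_congr rfl (fun _ => ?_) fun _ => rfl
  rw [mul_right_comm _ _ (Fintype.card F : ℂ), mul_assoc _ _ (Fintype.card F : ℂ), hcard]

lemma weilKernel_mul_weyl_of_ne_zero (hF : ringChar F ≠ 2) (hψ : ψ.IsPrimitive) {g : SL(2, F)}
    (hc : g 1 0 ≠ 0) (hd : g 1 1 ≠ 0) :
    weilKernel ψ (g * weyl) = weilKernel ψ g * weilKernel ψ weyl := by
  ext y x
  have hdet := g.det_coe
  rw [det_fin_two] at hdet
  have hG := gaussSum_quadChar_ne_zero hF hψ
  have hphase : (g 0 1 * y ^ 2 - 2 * x * y - g 1 0 * x ^ 2) / g 1 1 = g 0 0 * y ^ 2 / g 1 0 +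
      -((y / g 1 0 + x) ^ 2 / (g 1 1 / g 1 0)) := by
    field_simp
    linear_combination -hdet * y ^ 2
  have hχ : quadChar F (g 1 0) * quadChar F (g 1 1 / g 1 0) = quadChar F (g 1 1) := by
    rw [← map_mul, mul_div_cancel₀ _ hc]
  rw [weilKernel_mul_weyl_apply, weilKernel_mul_weilKernel_weyl_apply hc, if_neg hd,
    sum_quadratic hF hψ (div_ne_zero hd hc), hphase, AddChar.map_add_eq_mul, ← hχ]
  field_simp

lemma weilKernel_mul_weyl (hF : ringChar F ≠ 2) (hψ : ψ.IsPrimitive) (g : SL(2, F)) :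
    weilKernel ψ (g * weyl) = weilKernel ψ g * weilKernel ψ weyl := by
  by_cases hc : g 1 0 = 0
  · exact weilKernel_mul_weyl_of_one_zero_eq_zero hc
  by_cases hd : g 1 1 = 0
  · exact weilKernel_mul_weyl_of_one_one_eq_zero hF hψ hd
  · exact weilKernel_mul_weyl_of_ne_zero hF hψ hc hd

lemma weilKernel_mul (hF : ringChar F ≠ 2) (hψ : ψ.IsPrimitive) (g h : SL(2, F)) :
    weilKernel ψ (g * h) = weilKernel ψ g * weilKernel ψ h := by
  refine weyl_unip_induction
    (P := fun h => ∀ g, weilKernel ψ (g * h) = weilKernel ψ g * weilKernel ψ h)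
    (fun h h' hh hh' g => ?_) (weilKernel_mul_weyl hF hψ) (fun b g => ?_) h g
  · rw [← mul_assoc, hh', hh, hh', mul_assoc]
  · ext y x
    simp [weilKernel_mul_unip_apply, mul_apply, weilKernel_unip]

/-- The Weil representation of `SL(2, F)` on functions on `F`. -/
noncomputable def weilRep (hF : ringChar F ≠ 2) (hψ : ψ.IsPrimitive) :
    Representation ℂ SL(2, F) (F → ℂ) where
  toFun g := toLin' (weilKernel ψ g)
  map_one' := by rw [weilKernel_one, toLin'_one]; rfl
  map_mul' g h := by rw [weilKernel_mul hF hψ, toLin'_mul]; rfl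

variable (hF : ringChar F ≠ 2) (hψ : ψ.IsPrimitive)

lemma weilRep_apply (g : SL(2, F)) (f : F → ℂ) : weilRep hF hψ g f = weilKernel ψ g *ᵥ f := rfl

lemma weilRep_unip (b : F) (f : F → ℂ) (y : F) :
    weilRep hF hψ (unip b) f y = ψ (b * y ^ 2) * f y := by
  simp [weilRep_apply, mulVec, dotProduct, weilKernel_unip]

lemma weilRep_torus (a : Fˣ) (f : F → ℂ) (y : F) :
    weilRep hF hψ (torus a) f y = quadChar F a * f (a * y) := by
  simp [weilRep_apply, mulVec, dotProduct, weilKernel_torus]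

lemma weightProj_weilRep (j : F) (f : F → ℂ) (y : F) :
    weightProj (weilRep hF hψ) ψ j f y = if y ^ 2 = j then f y else 0 := by
  have hsum : ∑ b, ψ (-(j * b)) * ψ (b * y ^ 2) =
      if y ^ 2 = j then (Fintype.card F : ℂ) else 0 := by
    have h := AddChar.sum_mulShift (y ^ 2 - j) hψ
    rw [Nat.cast_ite, Nat.cast_zero] at h
    simp_rw [← AddChar.map_add_eq_mul, ← sub_eq_zero (b := j), ← h]
    exact Finset.sum_congr rfl fun b _ => congrArg ψ (by ring)
  simp_rw [weightProj_apply, Pi.smul_apply, Finset.sum_apply, Pi.smul_apply, weilRep_unip,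
    smul_eq_mul, ← mul_assoc, ← Finset.sum_mul, hsum]
  split_ifs <;> simp

lemma weilKernel_neg_neg (g : SL(2, F)) (y x : F) :
    weilKernel ψ g (-y) (-x) = weilKernel ψ g y x := by
  simp [weilKernel]

lemma weilRep_mem_oddFunctions (g : SL(2, F)) {f : F → ℂ} (hf : f ∈ oddFunctions F) :
    weilRep hF hψ g f ∈ oddFunctions F := fun y => by
  calc ∑ x, weilKernel ψ g (-y) x * f x
      = ∑ x, weilKernel ψ g (-y) (-x) * f (-x) := (Equiv.sum_comp (Equiv.neg F) _).symm
    _ = -∑ x, weilKernel ψ g y x * f x := by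
      simp_rw [weilKernel_neg_neg, hf _, mul_neg, Finset.sum_neg_distrib]

/-- The odd part of the Weil representation. -/
noncomputable def oddWeilRep : Representation ℂ SL(2, F) (oddFunctions F) :=
  Subrepresentation.toRepresentation (ρ := weilRep hF hψ)
    ⟨oddFunctions F, fun g _ hf => weilRep_mem_oddFunctions hF hψ g hf⟩

lemma weightProj_oddWeilRep (j : F) (f : oddFunctions F) (y : F) :
    (weightProj (oddWeilRep hF hψ) ψ j f : F → ℂ) y = if y ^ 2 = j then (f : F → ℂ) y else 0 := by
  rw [← weightProj_weilRep hF hψ]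
  let incl : (oddWeilRep hF hψ).IntertwiningMap (weilRep hF hψ) :=
    ⟨(oddFunctions F).subtype, fun _ => rfl⟩
  exact congrFun (map_weightProj ψ incl j f) y

lemma weightProj_sq_oddWeilRep {x : F} (hx : x ≠ 0) (f : oddFunctions F) :
    weightProj (oddWeilRep hF hψ) ψ (x ^ 2) f = (f : F → ℂ) x • oddDelta x := by
  ext y
  rw [weightProj_oddWeilRep, Submodule.coe_smul, Pi.smul_apply, smul_eq_mul]
  rcases eq_or_ne y x with rfl | hy
  · rw [if_pos rfl, oddDelta_apply_self hF hx, mul_one]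
  rcases eq_or_ne y (-x) with rfl | hy'
  · rw [if_pos (neg_sq x), f.2, (oddDelta x).2, oddDelta_apply_self hF hx, mul_neg_one]
  · rw [if_neg (by simp [sq_eq_sq_iff_eq_or_eq_neg, hy, hy']), oddDelta_apply]
    simp [hy, hy']

lemma weights_oddWeilRep : weights (oddWeilRep hF hψ) ψ = (· ^ 2) '' {0}ᶜ := by
  ext j
  constructor
  · intro hj
    obtain ⟨f, hf⟩ := DFunLike.exists_ne hj
    obtain ⟨y, hy⟩ := Function.ne_iff.mp (Subtype.coe_injective.ne hf)
    obtain ⟨rfl, hfy⟩ := ite_ne_right_iff.mp (weightProj_oddWeilRep hF hψ j f y ▸ hy)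
    exact ⟨y, fun h => hfy (h ▸ oddFunctions_apply_zero f), rfl⟩
  · rintro ⟨x, hx, rfl⟩ h
    have hval := weightProj_oddWeilRep hF hψ (x ^ 2) (oddDelta x) x
    rw [if_pos rfl, oddDelta_apply_self hF hx, h] at hval
    exact zero_ne_one hval

lemma oddWeilRep_torus_oddDelta (a : Fˣ) (x : F) :
    oddWeilRep hF hψ (torus a) (oddDelta (a * x)) = quadChar F a • oddDelta x := by
  ext y
  change weilRep hF hψ (torus a) _ y = _
  simp [weilRep_torus, oddDelta_apply, ← mul_neg]

lemma isIrreducible_oddWeilRep : (oddWeilRep hF hψ).IsIrreducible := by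
  refine (isIrreducible_iff _).mpr ⟨⟨oddDelta 1, 0, fun h => ?_⟩, fun p hp =>
    or_iff_not_imp_left.mpr fun hbot => ?_⟩
  · have hval := oddDelta_apply_self hF (one_ne_zero (α := F))
    rw [h] at hval
    exact zero_ne_one hval
  obtain ⟨f, hfp, hf⟩ := p.ne_bot_iff.mp hbot
  obtain ⟨x, hx⟩ := Function.ne_iff.mp (Subtype.coe_injective.ne hf)
  have hx0 : x ≠ 0 := fun h => hx (h ▸ oddFunctions_apply_zero f)
  have hdelta : oddDelta x ∈ p := by
    rw [← p.smul_mem_iff hx, ← weightProj_sq_oddWeilRep hF hψ hx0]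
    exact weightProj_mem _ ψ hp (x ^ 2) hfp
  have horbit (y : F) (hy : y ≠ 0) : oddDelta y ∈ p := by
    let a : Fˣ := Units.mk0 (x / y) (div_ne_zero hx0 hy)
    have h := oddWeilRep_torus_oddDelta hF hψ a y
    rw [Units.val_mk0, div_mul_cancel₀ _ hy] at h
    have hχ := left_ne_zero_of_mul_eq_one (quadChar_mul_self a.ne_zero)
    exact (p.smul_mem_iff hχ).mp (h ▸ hp _ _ hdelta)
  refine eq_top_iff.mpr fun g _ => (p.smul_mem_iff (two_ne_zero (α := ℂ))).mp ?_
  rw [two_smul_eq_sum_oddDelta]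
  refine p.sum_mem fun y _ => ?_
  rcases eq_or_ne y 0 with rfl | hy
  · rw [oddFunctions_apply_zero, zero_smul]
    exact zero_mem p
  · exact p.smul_mem _ (horbit y hy)

end Weil

section SevenExistence

lemma injective_of_isPrimitive {n : ℕ} [NeZero n] {χ : AddChar (ZMod n) ℂ} (hχ : χ.IsPrimitive) :
    Function.Injective χ := by
  intro i j hij
  rw [← sub_eq_zero, ← AddChar.IsPrimitive.zmod_char_eq_one_iff n hχ, AddChar.map_sub_eq_div, hij]
  exact div_self (χ.val_isUnit j).ne_zero

/-- An odd function on `ZMod 7` is determined by its values at the squares `1`, `2` and `4`. -/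
def oddFunctionsEquivSeven : oddFunctions (ZMod 7) ≃ₗ[ℂ] Fin 3 → ℂ where
  toFun f := ![(f : ZMod 7 → ℂ) 1, (f : ZMod 7 → ℂ) 2, (f : ZMod 7 → ℂ) 4]
  map_add' f g := by ext i; fin_cases i <;> rfl
  map_smul' c f := by ext i; fin_cases i <;> rfl
  invFun v := ⟨![0, v 0, v 1, -v 2, v 2, -v 1, -v 0], fun x => by
    fin_cases x <;> first | exact neg_zero.symm | rfl | exact (neg_neg _).symm⟩
  left_inv f := by
    ext x
    have h0 := oddFunctions_apply_zero f
    have h := f.2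
    fin_cases x
    · exact h0.symm
    · rfl
    · rfl
    · exact (h 4).symm
    · rfl
    · exact (h 2).symm
    · exact (h 1).symm
  right_inv v := by ext i; fin_cases i <;> rfl

variable {ψ : AddChar (ZMod 7) ℂ} (hψ : ψ.IsPrimitive)

/-- The three-dimensional odd Weil representation of `SL(2, ZMod 7)` attached to `ψ`, in the
coordinates given by the values at `1`, `2` and `4`. -/
noncomputable def weilSeven : Representation ℂ SL(2, ZMod 7) (Fin 3 → ℂ) :=
  conjRep (oddWeilRep (by simp [ZMod.ringChar_zmod_n]) hψ) oddFunctionsEquivSeven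

lemma isIrreducible_weilSeven : (weilSeven hψ).IsIrreducible :=
  isIrreducible_of_equiv (equivConjRep _ _) (isIrreducible_oddWeilRep _ hψ)

lemma weights_weilSeven : weights (weilSeven hψ) ψ = {1, 2, 4} := by
  rw [weilSeven, ← weights_eq_of_equiv ψ (equivConjRep _ _), weights_oddWeilRep]
  ext j
  simp only [Set.mem_image, Set.mem_compl_singleton_iff, Set.mem_insert_iff, Set.mem_singleton_iff]
  revert j
  decide

lemma spectrum_weilSeven_unip_one :
    spectrum ℂ (weilSeven hψ (unip 1)) = {ψ 1, ψ 2, ψ 4} := by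
  rw [spectrum_unip _ hψ, weights_weilSeven]
  simp [Set.image_insert_eq]

variable {V : Type*} [AddCommGroup V] [Module ℂ V] {ρ : Representation ℂ SL(2, ZMod 7) V}

lemma weights_eq_or_eq [FiniteDimensional ℂ V] (hψ : ψ.IsPrimitive) (hρ : ∃ g, ρ g ≠ 1)
    (hcard : (spectrum ℂ (ρ (unip 1))).ncard ≤ 3) :
    weights ρ ψ = {1, 2, 4} ∨ weights ρ ψ = {3, 5, 6} := by
  obtain ⟨j, hj, hj0⟩ := (exists_mem_weights_ne_zero_iff ρ hψ).mpr hρ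
  have hcard' : (weights ρ ψ).ncard ≤ 3 := by
    simp only [spectrum_unip ρ hψ, mul_one] at hcard
    rwa [Set.ncard_image_of_injective _ (injective_of_isPrimitive hψ)] at hcard
  have hfour : 4 * j ∈ weights ρ ψ := by
    rwa [← sq_mul_mem_weights_iff ρ ψ unitTwo] at hj
  have htwo : 2 * j ∈ weights ρ ψ := by
    rwa [← sq_mul_mem_weights_iff ρ ψ (unitTwo ^ 2)] at hj
  have horbit_card : ∀ i : ZMod 7, i ≠ 0 → ({i, 2 * i, 4 * i} : Finset (ZMod 7)).card = 3 := by
    decide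
  have horbit_eq : ∀ i : ZMod 7, i ≠ 0 → ({i, 2 * i, 4 * i} : Finset (ZMod 7)) = {1, 2, 4} ∨
      ({i, 2 * i, 4 * i} : Finset (ZMod 7)) = {3, 5, 6} := by
    decide
  have hweights : ↑({j, 2 * j, 4 * j} : Finset (ZMod 7)) = weights ρ ψ :=
    Set.eq_of_subset_of_ncard_le (by simp [Set.insert_subset_iff, hj, htwo, hfour])
      (by rwa [Set.ncard_coe_finset, horbit_card j hj0]) (Set.toFinite _)
  rw [← hweights]
  exact (horbit_eq j hj0).imp (fun h => by simp [h]) (fun h => by simp [h])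

lemma nonempty_equiv_weilSeven [ρ.IsIrreducible] (hρ : weights ρ ψ = {1, 2, 4}) :
    Nonempty (ρ.Equiv (weilSeven hψ)) := by
  have := isIrreducible_weilSeven hψ
  have hσ := weights_weilSeven hψ
  obtain ⟨e⟩ := nonempty_equiv_of_weights_subset hψ (by simp) hσ.subset (by simp [hσ])
    hρ.subset (by simp [hρ])
  exact ⟨e.symm⟩

lemma not_nonempty_equiv_weilSeven_mulShift (hψ₃ : (ψ.mulShift 3).IsPrimitive) :
    ¬ Nonempty ((weilSeven hψ).Equiv (weilSeven hψ₃)) := by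
  rintro ⟨e⟩
  have h := weights_mulShift (weilSeven hψ₃) ψ 3
  rw [← weights_eq_of_equiv ψ e, weights_weilSeven, weights_weilSeven] at h
  have h3 : (1 : ZMod 7) ∈ ((3 * ·) ⁻¹' {1, 2, 4} : Set (ZMod 7)) := h ▸ Set.mem_insert _ _
  revert h3
  simp only [Set.mem_preimage, Set.mem_insert_iff, Set.mem_singleton_iff]
  decide

lemma nonempty_equiv_weilSeven_mulShift [ρ.IsIrreducible] (hψ₃ : (ψ.mulShift 3).IsPrimitive)
    (hρ : weights ρ ψ = {3, 5, 6}) : Nonempty (ρ.Equiv (weilSeven hψ₃)) := by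
  refine nonempty_equiv_weilSeven hψ₃ ?_
  rw [weights_mulShift, hρ]
  ext j
  simp only [Set.mem_preimage, Set.mem_insert_iff, Set.mem_singleton_iff]
  revert j
  decide

lemma exists_weilSeven_ne_one : ∃ g, weilSeven hψ g ≠ 1 :=
  (exists_mem_weights_ne_zero_iff _ hψ).mp ⟨1, by simp [weights_weilSeven hψ], one_ne_zero⟩

lemma stdAddChar_natCast (n : ℕ) [NeZero n] (k : ℕ) :
    ZMod.stdAddChar (k : ZMod n) = ζ n ^ k := by
  rw [← Int.cast_natCast, ZMod.stdAddChar_coe, ζ, ← Complex.exp_nat_mul]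
  congr 1
  push_cast
  ring

end SevenExistence

lemma isIrreducibleRep_iff {G V : Type} [Group G] [AddCommGroup V] [Module ℂ V]
    (ρ : Representation ℂ G V) : IsIrreducibleRep ρ ↔ ρ.IsIrreducible := by
  simp_rw [isIrreducible_iff, IsIrreducibleRep, Submodule.map_le_iff_le_comap]; rfl

lemma repIso_iff {G V W : Type} [Group G] [AddCommGroup V] [Module ℂ V]
    [AddCommGroup W] [Module ℂ W] (ρ : Representation ℂ G V) (σ : Representation ℂ G W) :
    RepIso ρ σ ↔ Nonempty (ρ.Equiv σ) :=
  ⟨fun ⟨e, he⟩ => ⟨.mk e fun g => LinearMap.ext (he g)⟩,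
    fun ⟨e⟩ => ⟨e.toLinearEquiv, e.toIntertwiningMap.isIntertwining⟩⟩

end SL2Rep

/-- Up to isomorphism, `SL(2, ℤ/7ℤ)` has exactly two nontrivial irreducible
finite-dimensional complex representations `ρ` for which `ρ(t)` has at most three distinct
eigenvalues; both are three-dimensional, with `t`-spectra `{ζ₇, ζ₇², ζ₇⁴}` and
`{ζ₇³, ζ₇⁵, ζ₇⁶}` respectively. -/
theorem stmt8 :
    ∃ (ρ₁ ρ₂ : Representation ℂ (SL2 7) (Fin 3 → ℂ)),
      (IsIrreducibleRep ρ₁ ∧ IsNontrivialRep ρ₁ ∧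
        spectrum ℂ (ρ₁ (tGen 7)) = {ζ 7, ζ 7 ^ 2, ζ 7 ^ 4}) ∧
      (IsIrreducibleRep ρ₂ ∧ IsNontrivialRep ρ₂ ∧
        spectrum ℂ (ρ₂ (tGen 7)) = {ζ 7 ^ 3, ζ 7 ^ 5, ζ 7 ^ 6}) ∧
      ¬ RepIso ρ₁ ρ₂ ∧
      (∀ (W : Type) [AddCommGroup W] [Module ℂ W] [FiniteDimensional ℂ W]
        (ρ : Representation ℂ (SL2 7) W),
        IsIrreducibleRep ρ → IsNontrivialRep ρ →
        (spectrum ℂ (ρ (tGen 7))).ncard ≤ 3 →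
        RepIso ρ ρ₁ ∨ RepIso ρ ρ₂) := by
  have hψ₁ := ZMod.isPrimitive_stdAddChar 7
  have hψ₂ := AddChar.IsPrimitive.of_ne_one (hψ₁ (show (3 : ZMod 7) ≠ 0 by decide))
  have hval (k : ℕ) := SL2Rep.stdAddChar_natCast 7 k
  refine ⟨SL2Rep.weilSeven hψ₁, SL2Rep.weilSeven hψ₂, ⟨?_, ?_, ?_⟩, ⟨?_, ?_, ?_⟩, ?_, ?_⟩
  · exact (SL2Rep.isIrreducibleRep_iff _).mpr (SL2Rep.isIrreducible_weilSeven hψ₁)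
  · exact SL2Rep.exists_weilSeven_ne_one hψ₁
  · rw [← hval, ← hval, ← pow_one (ζ 7), ← hval, Nat.cast_one]
    exact SL2Rep.spectrum_weilSeven_unip_one hψ₁
  · exact (SL2Rep.isIrreducibleRep_iff _).mpr (SL2Rep.isIrreducible_weilSeven hψ₂)
  · exact SL2Rep.exists_weilSeven_ne_one hψ₂
  · rw [← hval, ← hval, ← hval, Set.pair_comm]
    exact SL2Rep.spectrum_weilSeven_unip_one hψ₂
  · rw [SL2Rep.repIso_iff]
    exact SL2Rep.not_nonempty_equiv_weilSeven_mulShift hψ₁ hψ₂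
  · intro W _ _ _ ρ hirr hnontriv hcard
    have := (SL2Rep.isIrreducibleRep_iff ρ).mp hirr
    rw [SL2Rep.repIso_iff, SL2Rep.repIso_iff]
    exact (SL2Rep.weights_eq_or_eq hψ₁ hnontriv hcard).imp
      (SL2Rep.nonempty_equiv_weilSeven hψ₁) (SL2Rep.nonempty_equiv_weilSeven_mulShift hψ₂)
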